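/- Let P = abcdef be a simple hexagon, counterclockwise, whose reflex vertices are exactly a and d. Then either both diagonals ae and bd lie inside P, or both diagonals ac and df lie inside P. -/

import Mathlib

open scoped BigOperators

/-- Points in the plane. -/
abbrev Pt := ℝ × ℝ

/-- 2×2 determinant (cross product) of two plane vectors. -/
noncomputable def det2 (p q : Pt) : ℝ := p.1 * q.2 - p.2 * q.1

/-- Open half-plane strictly to the left of the directed line from `p` to `q`. -/
def Lhp (p q : Pt) : Set Pt := {x | 0 < det2 (q - p) (x - p)}

/-- Open half-plane strictly to the right of the directed line from `p` to `q`. -/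
def Rhp (p q : Pt) : Set Pt := {x | det2 (q - p) (x - p) < 0}

/-- The boundary of the polygon with vertices `v 0, …, v (n-1)`:
the union of its (cyclically consecutive) edges. -/
def polyBoundary {n : ℕ} [NeZero n] (v : Fin n → Pt) : Set Pt :=
  ⋃ i : Fin n, segment ℝ (v i) (v (i + 1))

/-- `v` describes a simple polygon: at least 3 distinct vertices, and two distinct
edges may only meet at a common endpoint. -/
def IsSimplePolygon {n : ℕ} [NeZero n] (v : Fin n → Pt) : Prop :=
  3 ≤ n ∧ Function.Injective v ∧
    ∀ i j : Fin n, i ≠ j →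
      segment ℝ (v i) (v (i + 1)) ∩ segment ℝ (v j) (v (j + 1)) ⊆
        ({v i, v (i + 1)} ∩ {v j, v (j + 1)} : Set Pt)

/-- The interior of the polygon: the union of the bounded connected components of the
complement of the boundary. -/
def polyInterior {n : ℕ} [NeZero n] (v : Fin n → Pt) : Set Pt :=
  {x | x ∉ polyBoundary v ∧
    Bornology.IsBounded (connectedComponentIn (polyBoundary v)ᶜ x)}

/-- The (closed) polygonal region: interior together with boundary. -/
def polyRegion {n : ℕ} [NeZero n] (v : Fin n → Pt) : Set Pt :=
  polyBoundary v ∪ polyInterior v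

/-- Twice the signed area of the polygon. -/
noncomputable def signedArea2 {n : ℕ} [NeZero n] (v : Fin n → Pt) : ℝ :=
  ∑ i : Fin n, det2 (v i) (v (i + 1))

/-- The vertices are listed in counterclockwise order. -/
def IsCCW {n : ℕ} [NeZero n] (v : Fin n → Pt) : Prop := 0 < signedArea2 v

/-- The vertex `v i` of a counterclockwise polygon is strictly convex
(interior angle strictly less than 180°). -/
def StrictlyConvexAt {n : ℕ} [NeZero n] (v : Fin n → Pt) (i : Fin n) : Prop :=
  0 < det2 (v i - v (i - 1)) (v (i + 1) - v i)

/-- The vertex `v i` of a counterclockwise polygon is reflex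
(interior angle greater than or equal to 180°). -/
def ReflexAt {n : ℕ} [NeZero n] (v : Fin n → Pt) (i : Fin n) : Prop :=
  det2 (v i - v (i - 1)) (v (i + 1) - v i) ≤ 0

/-- The wedge of vertex `v i`:  `L(v⁻, v) ∩ R(v⁺, v) ∩ interior P`. -/
def Wedge {n : ℕ} [NeZero n] (v : Fin n → Pt) (i : Fin n) : Set Pt :=
  Lhp (v (i - 1)) (v i) ∩ Rhp (v (i + 1)) (v i) ∩ polyInterior v

/-- `x` sees `y` inside the polygon `v`: the segment `xy` is contained in the region. -/
def Sees {n : ℕ} [NeZero n] (v : Fin n → Pt) (x y : Pt) : Prop :=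
  segment ℝ x y ⊆ polyRegion v

/-- The kernel of the polygon: the points of the region that see every point of it. -/
def polyKernel {n : ℕ} [NeZero n] (v : Fin n → Pt) : Set Pt :=
  {x ∈ polyRegion v | ∀ y ∈ polyRegion v, segment ℝ x y ⊆ polyRegion v}

/-- The open triangle on three points. -/
def openTriangle (a b c : Pt) : Set Pt := interior (convexHull ℝ {a, b, c})

/-- `a b c d` (in counterclockwise order) form a strictly convex quadrilateral. -/
def StrictConvexQuad (a b c d : Pt) : Prop :=
  0 < det2 (b - a) (c - b) ∧ 0 < det2 (c - b) (d - c) ∧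
    0 < det2 (d - c) (a - d) ∧ 0 < det2 (a - d) (b - a)

/-- The closed region of a quadrilateral cell. -/
noncomputable def quadSet (q : Pt × Pt × Pt × Pt) : Set Pt :=
  convexHull ℝ {q.1, q.2.1, q.2.2.1, q.2.2.2}

/-- The closed region of a triangular cell. -/
noncomputable def triSet (t : Pt × Pt × Pt) : Set Pt :=
  convexHull ℝ {t.1, t.2.1, t.2.2}

/-- The vertices of a quadrilateral cell. -/
noncomputable def quadVerts (q : Pt × Pt × Pt × Pt) : Finset Pt :=
  {q.1, q.2.1, q.2.2.1, q.2.2.2}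

/-- The vertices of a triangular cell. -/
noncomputable def triVerts (t : Pt × Pt × Pt) : Finset Pt :=
  {t.1, t.2.1, t.2.2}

/-- A strictly convex quadrangulation of a finite planar point set `S`:
a decomposition of `conv S` into strictly convex quadrilaterals and at most one
(nondegenerate) triangle, with pairwise disjoint interiors, whose vertex set contains
`S`, and such that no point of `S` is interior to a cell. -/
structure ConvexQuadrangulation (S : Finset Pt) where
  quads : Finset (Pt × Pt × Pt × Pt)
  tris : Finset (Pt × Pt × Pt)
  tris_card : tris.card ≤ 1
  quads_convex : ∀ q ∈ quads, StrictConvexQuad q.1 q.2.1 q.2.2.1 q.2.2.2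
  tris_nondeg : ∀ t ∈ tris, 0 < det2 (t.2.1 - t.1) (t.2.2 - t.2.1)
  covers : ((⋃ q ∈ quads, quadSet q) ∪ ⋃ t ∈ tris, triSet t) = convexHull ℝ (S : Set Pt)
  cells_disjoint : ((quadSet '' quads) ∪ (triSet '' tris)).Pairwise
    fun A B => interior A ∩ interior B = ∅
  verts_cover : (S : Set Pt) ⊆
    ((quads.biUnion quadVerts ∪ tris.biUnion triVerts : Finset Pt) : Set Pt)
  no_pt_in_quad_interior : ∀ q ∈ quads, ∀ p ∈ S, p ∉ interior (quadSet q)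
  no_pt_in_tri_interior : ∀ t ∈ tris, ∀ p ∈ S, p ∉ interior (triSet t)

/-- The Steiner points of a quadrangulation: vertices of the decomposition not in `S`. -/
noncomputable def steinerPoints (S : Finset Pt) (Q : ConvexQuadrangulation S) : Finset Pt :=
  (Q.quads.biUnion quadVerts ∪ Q.tris.biUnion triVerts) \ S



/-- Orientation determinant of a triple of points. -/
noncomputable def ori (p q r : Pt) : ℝ :=
  (q.1 - p.1) * (r.2 - p.2) - (q.2 - p.2) * (r.1 - p.1)

/-- Closed triangle (counterclockwise) cut out by its three edge inequalities. -/
def Tri (p q r : Pt) : Set Pt := {x | 0 ≤ ori p q x ∧ 0 ≤ ori q r x ∧ 0 ≤ ori r p x}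

lemma ori_cont (p q : Pt) : Continuous (fun x => ori p q x) := by
  unfold ori; fun_prop

lemma tri_closed (p q r : Pt) : IsClosed (Tri p q r) := by
  have h1 := isClosed_le continuous_const (ori_cont p q) (f := fun _ => (0:ℝ))
  have h2 := isClosed_le continuous_const (ori_cont q r) (f := fun _ => (0:ℝ))
  have h3 := isClosed_le continuous_const (ori_cont r p) (f := fun _ => (0:ℝ))
  exact h1.inter (h2.inter h3)

lemma mem_hull {p q r x : Pt} (h : 0 < ori p q r) (hx : x ∈ Tri p q r) :
    x ∈ convexHull ℝ ({p, q, r} : Set Pt) := by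
  obtain ⟨h1, h2, h3⟩ := hx
  have e : ori q r x + ori r p x + ori p q x = ori p q r := by unfold ori; ring
  have hx : x = (ori q r x / ori p q r) • p + (ori r p x / ori p q r) • q
      + (ori p q x / ori p q r) • r := by
    ext <;> simp <;> field_simp <;> unfold ori <;> ring
  rw [hx]
  have hc := convex_convexHull ℝ ({p, q, r} : Set Pt)
  have hs : ({p, q, r} : Set Pt) ⊆ convexHull ℝ {p, q, r} := subset_convexHull ℝ _
  have hh := hc.sum_mem (t := Finset.univ)
    (w := ![ori q r x / ori p q r, ori r p x / ori p q r, ori p q x / ori p q r])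
    (z := ![p, q, r])
    (by intro i _; fin_cases i <;> simp <;> positivity)
    (by simp [Fin.sum_univ_three]; rw [← add_div, ← add_div, e]; exact div_self h.ne')
    (by intro i _; fin_cases i <;> apply hs <;> simp)
  simpa [Fin.sum_univ_three] using hh

lemma tri_bdd {p q r : Pt} (h : 0 < ori p q r) : Bornology.IsBounded (Tri p q r) := by
  have : Bornology.IsBounded (convexHull ℝ ({p, q, r} : Set Pt)) := by
    rw [isBounded_convexHull]
    exact (Set.toFinite _).isBounded
  exact this.subset fun x hx => mem_hull h hx

lemma seg_sub_tri {p q r : Pt} (h : 0 < ori p q r) : segment ℝ p q ⊆ Tri p q r := by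
  rintro x ⟨s, t, hs, ht, hst, rfl⟩
  obtain rfl : s = 1 - t := by linarith
  have e1 : ori p q ((1 - t) • p + t • q) = 0 := by simp [ori]; ring
  have e2 : ori q r ((1 - t) • p + t • q) = (1 - t) * ori p q r := by simp [ori]; ring
  have e3 : ori r p ((1 - t) • p + t • q) = t * ori p q r := by simp [ori]; ring
  refine ⟨e1.ge, ?_, ?_⟩
  · rw [e2]; positivity
  · rw [e3]; positivity

lemma tri_rot {p q r : Pt} : Tri p q r = Tri q r p := by
  ext x; simp only [Tri, Set.mem_setOf_eq]; tauto

lemma ori_rot (p q r : Pt) : ori q r p = ori p q r := by unfold ori; ring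

/-- Every point of the segment is in `B` or interior to `W`. -/
def EdgeOK (B W : Set Pt) (p q : Pt) : Prop := ∀ x ∈ segment ℝ p q, x ∈ B ∨ W ∈ nhds x

lemma edge_of_sub {B W : Set Pt} {p q : Pt} (h : segment ℝ p q ⊆ B) : EdgeOK B W p q :=
  fun _ hx => Or.inl (h hx)

lemma edge_symm {B W : Set Pt} {p q : Pt} (h : EdgeOK B W p q) : EdgeOK B W q p :=
  fun x hx => h x (segment_symm ℝ p q ▸ hx)

lemma edge_diag {B W : Set Pt} {p q r s : Pt} (h1 : 0 < ori p q r) (h2 : 0 < ori q p s)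
    (hp : p ∈ B) (hq : q ∈ B) (w1 : Tri p q r ⊆ W) (w2 : Tri q p s ⊆ W) :
    EdgeOK B W p q := by
  rintro x ⟨u, t, hu, ht, hut, rfl⟩
  obtain rfl : u = 1 - t := by linarith
  rcases ht.eq_or_lt with rfl | ht
  · left; simpa using hp
  rcases hu.eq_or_lt with hu | hu
  · left
    obtain rfl : t = 1 := by linarith
    simpa using hq
  right
  have e2 : ori q r ((1 - t) • p + t • q) = (1 - t) * ori p q r := by simp [ori]; ring
  have e3 : ori r p ((1 - t) • p + t • q) = t * ori p q r := by simp [ori]; ring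
  have e4 : ori p s ((1 - t) • p + t • q) = t * ori q p s := by simp [ori]; ring
  have e5 : ori s q ((1 - t) • p + t • q) = (1 - t) * ori q p s := by simp [ori]; ring
  have f2 := (ori_cont q r).continuousAt.eventually_const_lt
    (show 0 < ori q r ((1 - t) • p + t • q) by rw [e2]; positivity)
  have f3 := (ori_cont r p).continuousAt.eventually_const_lt
    (show 0 < ori r p ((1 - t) • p + t • q) by rw [e3]; positivity)
  have f4 := (ori_cont p s).continuousAt.eventually_const_lt
    (show 0 < ori p s ((1 - t) • p + t • q) by rw [e4]; positivity)
  have f5 := (ori_cont s q).continuousAt.eventually_const_lt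
    (show 0 < ori s q ((1 - t) • p + t • q) by rw [e5]; positivity)
  filter_upwards [f2, f3, f4, f5] with y g2 g3 g4 g5
  have e : ori q p y = - ori p q y := by unfold ori; ring
  rcases le_total 0 (ori p q y) with h | h
  · exact w1 ⟨h, g2.le, g3.le⟩
  · exact w2 ⟨by linarith, g4.le, g5.le⟩

lemma on_edge {p q r x : Pt} (h : 0 < ori p q r) (hx : x ∈ Tri p q r) (h0 : ori p q x = 0) :
    x ∈ segment ℝ p q := by
  obtain ⟨h1, h2, h3⟩ := hx
  have e : ori q r x + ori r p x + ori p q x = ori p q r := by unfold ori; ring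
  have e' : ori q r x + ori r p x = ori p q r := by linarith
  refine ⟨ori q r x / ori p q r, ori r p x / ori p q r, by positivity, by positivity, ?_, ?_⟩
  · rw [← add_div, e', div_self h.ne']
  · have hx : x = (ori q r x / ori p q r) • p + (ori r p x / ori p q r) • q
      + (ori p q x / ori p q r) • r := by
      ext <;> simp <;> field_simp <;> unfold ori <;> ring
    rw [h0] at hx
    simpa using hx.symm

lemma tri_ok {B W : Set Pt} {p q r : Pt} (h : 0 < ori p q r) (w : Tri p q r ⊆ W)
    (e1 : EdgeOK B W p q) (e2 : EdgeOK B W q r) (e3 : EdgeOK B W r p) :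
    ∀ x ∈ Tri p q r, x ∈ B ∨ W ∈ nhds x := by
  intro x hx
  obtain ⟨h1, h2, h3⟩ := id hx
  rcases h1.eq_or_lt with h1 | h1
  · exact e1 x (on_edge h hx h1.symm)
  rcases h2.eq_or_lt with h2 | h2
  · exact e2 x (on_edge (by rwa [ori_rot]) (tri_rot ▸ hx) h2.symm)
  rcases h3.eq_or_lt with h3 | h3
  · exact e3 x (on_edge (by rwa [ori_rot, ori_rot]) (tri_rot ▸ tri_rot ▸ hx) h3.symm)
  right
  filter_upwards [(ori_cont p q).continuousAt.eventually_const_lt h1,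
    (ori_cont q r).continuousAt.eventually_const_lt h2,
    (ori_cont r p).continuousAt.eventually_const_lt h3] with y g1 g2 g3
  exact w ⟨g1.le, g2.le, g3.le⟩

lemma sub_region {n : ℕ} [NeZero n] {v : Fin n → Pt} {W : Set Pt} (hc : IsClosed W)
    (hb : Bornology.IsBounded W) (h : ∀ x ∈ W, x ∈ polyBoundary v ∨ W ∈ nhds x) :
    W ⊆ polyRegion v := by
  intro x hx
  by_cases hxB : x ∈ polyBoundary v
  · exact Or.inl hxB
  refine Or.inr ⟨hxB, hb.subset ?_⟩
  have hpre : IsPreconnected (connectedComponentIn (polyBoundary v)ᶜ x) :=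
    isPreconnected_connectedComponentIn
  have hmem : x ∈ connectedComponentIn (polyBoundary v)ᶜ x := mem_connectedComponentIn hxB
  have hsub : connectedComponentIn (polyBoundary v)ᶜ x ⊆ interior W := by
    refine hpre.subset_left_of_subset_union isOpen_interior hc.isOpen_compl ?_ ?_ ?_
    · exact Set.disjoint_left.2 fun y hy hy' => hy' (interior_subset hy)
    · intro y hy
      by_cases hyW : y ∈ W
      · left
        rcases h y hyW with h | h
        · exact absurd h (connectedComponentIn_subset _ _ hy)
        · exact mem_interior_iff_mem_nhds.2 h
      · exact Or.inr hyW
    · exact ⟨x, hmem, mem_interior_iff_mem_nhds.2 ((h x hx).resolve_left hxB)⟩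
  exact hsub.trans interior_subset

/-- Triangulated hexagon, zigzag given by two ears and two middle triangles sharing `m n`. -/
lemma zigzag {k : ℕ} [NeZero k] {v : Fin k → Pt} {a b c d e f : Pt}
    (ab : segment ℝ a b ⊆ polyBoundary v) (bc : segment ℝ b c ⊆ polyBoundary v)
    (cd : segment ℝ c d ⊆ polyBoundary v) (de : segment ℝ d e ⊆ polyBoundary v)
    (ef : segment ℝ e f ⊆ polyBoundary v) (fa : segment ℝ f a ⊆ polyBoundary v) :
    (0 < ori a b d → 0 < ori a d e → 0 < ori b c d → 0 < ori e f a →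
      segment ℝ a e ⊆ polyRegion v ∧ segment ℝ b d ⊆ polyRegion v) ∧
    (0 < ori a c d → 0 < ori a d f → 0 < ori a b c → 0 < ori d e f →
      segment ℝ a c ⊆ polyRegion v ∧ segment ℝ d f ⊆ polyRegion v) := by
  have va := ab (left_mem_segment ℝ a b)
  have vb := bc (left_mem_segment ℝ b c)
  have vc := cd (left_mem_segment ℝ c d)
  have vd := de (left_mem_segment ℝ d e)
  have ve := ef (left_mem_segment ℝ e f)
  have vf := fa (left_mem_segment ℝ f a)
  constructor
  · intro h1 h2 h3 h4
    set W := Tri b d a ∪ Tri d e a ∪ Tri d b c ∪ Tri a e f with hW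
    have k1 : 0 < ori b d a := by rwa [ori_rot]
    have k2 : 0 < ori d e a := by rwa [ori_rot]
    have k3 : 0 < ori d b c := by rwa [← ori_rot]
    have k4 : 0 < ori a e f := by rwa [← ori_rot]
    have w1 : Tri b d a ⊆ W := fun x hx => by simp [hW, hx]
    have w2 : Tri d e a ⊆ W := fun x hx => by simp [hW, hx]
    have w3 : Tri d b c ⊆ W := fun x hx => by simp [hW, hx]
    have w4 : Tri a e f ⊆ W := fun x hx => by simp [hW, hx]
    have dbd : EdgeOK (polyBoundary v) W b d := edge_diag k1 k3 vb vd w1 w3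
    have dae : EdgeOK (polyBoundary v) W a e := edge_diag k4
      (by rwa [ori_rot] : 0 < ori e a d) va ve w4 (by rwa [← tri_rot])
    have dad : EdgeOK (polyBoundary v) W a d := edge_diag h2
      (by rwa [ori_rot] : 0 < ori d a b) va vd (by rwa [tri_rot]) (by rwa [← tri_rot])
    have hreg : W ⊆ polyRegion v := by
      refine sub_region ((((tri_closed _ _ _).union (tri_closed _ _ _)).union
        (tri_closed _ _ _)).union (tri_closed _ _ _)) ((((tri_bdd k1).union (tri_bdd k2)).union
        (tri_bdd k3)).union (tri_bdd k4)) ?_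
      rintro x (((hx | hx) | hx) | hx)
      · exact tri_ok k1 w1 dbd (edge_symm dad) (edge_of_sub ab) x hx
      · exact tri_ok k2 w2 (edge_of_sub de) (edge_symm dae) dad x hx
      · exact tri_ok k3 w3 (edge_symm dbd) (edge_of_sub bc) (edge_of_sub cd) x hx
      · exact tri_ok k4 w4 dae (edge_of_sub ef) (edge_of_sub fa) x hx
    exact ⟨(seg_sub_tri k4).trans (w4.trans hreg), (seg_sub_tri k1).trans (w1.trans hreg)⟩
  · intro h1 h2 h3 h4
    set W := Tri a c d ∪ Tri d f a ∪ Tri c a b ∪ Tri f d e with hW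
    have k2 : 0 < ori d f a := by rwa [ori_rot]
    have k3 : 0 < ori c a b := by rwa [← ori_rot]
    have k4 : 0 < ori f d e := by rwa [← ori_rot]
    have w1 : Tri a c d ⊆ W := fun x hx => by simp [hW, hx]
    have w2 : Tri d f a ⊆ W := fun x hx => by simp [hW, hx]
    have w3 : Tri c a b ⊆ W := fun x hx => by simp [hW, hx]
    have w4 : Tri f d e ⊆ W := fun x hx => by simp [hW, hx]
    have dac : EdgeOK (polyBoundary v) W a c := edge_diag h1 k3 va vc w1 w3
    have ddf : EdgeOK (polyBoundary v) W d f := edge_diag k2 k4 vd vf w2 w4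
    have dad : EdgeOK (polyBoundary v) W a d := edge_diag h2
      (by rwa [← ori_rot] : 0 < ori d a c) va vd (by rwa [tri_rot]) (by rwa [tri_rot])
    have hreg : W ⊆ polyRegion v := by
      refine sub_region ((((tri_closed _ _ _).union (tri_closed _ _ _)).union
        (tri_closed _ _ _)).union (tri_closed _ _ _)) ((((tri_bdd h1).union (tri_bdd k2)).union
        (tri_bdd k3)).union (tri_bdd k4)) ?_
      rintro x (((hx | hx) | hx) | hx)
      · exact tri_ok h1 w1 dac (edge_of_sub cd) (edge_symm dad) x hx
      · exact tri_ok k2 w2 ddf (edge_of_sub fa) dad x hx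
      · exact tri_ok k3 w3 (edge_symm dac) (edge_of_sub ab) (edge_of_sub bc) x hx
      · exact tri_ok k4 w4 (edge_symm ddf) (edge_of_sub de) (edge_of_sub ef) x hx
    exact ⟨(seg_sub_tri h1).trans (w1.trans hreg), (seg_sub_tri k2).trans (w2.trans hreg)⟩

lemma seg_cross {a b c d : Pt} (h1 : 0 < ori a b c) (h2 : ori a b d ≤ 0) (h3 : ori a c d ≤ 0)
    (h4 : 0 < ori b c d) : ∃ x, x ∈ segment ℝ a b ∧ x ∈ segment ℝ c d := by
  have e : ori b c d - ori a c d = ori a b c - ori a b d := by unfold ori; ring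
  have hD : 0 < ori a b c - ori a b d := by linarith
  have n2 : 0 ≤ - ori a b d := by linarith
  have n3 : 0 ≤ - ori a c d := by linarith
  refine ⟨(ori b c d / (ori a b c - ori a b d)) • a + (- ori a c d / (ori a b c - ori a b d)) • b,
    ⟨_, _, by positivity, by positivity, ?_, rfl⟩,
    ⟨- ori a b d / (ori a b c - ori a b d), ori a b c / (ori a b c - ori a b d),
      by positivity, by positivity, ?_, ?_⟩⟩
  · rw [← add_div, ← sub_eq_add_neg, e, div_self hD.ne']
  · rw [← add_div, neg_add_eq_sub, div_self hD.ne']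
  · ext <;> simp <;> field_simp <;> unfold ori <;> ring

lemma bad_case {a b c d e f : Pt} (hab : a ≠ b) (hfa : f ≠ a) (hbf : b ≠ f)
    (hadj : segment ℝ f a ∩ segment ℝ a b ⊆ ({f, a} ∩ {a, b} : Set Pt))
    (abc : 0 < ori a b c) (cde : ori c d e ≤ 0) (efa : 0 < ori e f a) (fab : ori f a b ≤ 0)
    (acd : 0 < ori a c d) (ade : 0 < ori a d e) (abd : ori a b d ≤ 0) (adf : ori a d f ≤ 0) :
    False := by
  have ace : 0 < ori a c e := by
    have : ori a c e = ori a c d + ori a d e - ori c d e := by unfold ori; ring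
    linarith
  have abe : ori a b e < 0 := by
    have : ori a b e * ori a c d = ori a b d * ori a c e - ori a b c * ori a d e := by
      unfold ori; ring
    have h1 : ori a b d * ori a c e ≤ 0 := mul_nonpos_of_nonpos_of_nonneg abd ace.le
    have h2 := mul_pos abc ade
    by_contra hh
    have := mul_nonneg (not_lt.1 hh) acd.le
    linarith
  have gp : ori a b d * ori e f a - ori a b e * ori a d f + ori f a b * ori a d e = 0 := by
    unfold ori; ring
  have t1 := mul_nonpos_of_nonpos_of_nonneg abd efa.le
  have t2 := mul_nonneg_of_nonpos_of_nonpos abe.le adf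
  have t3 := mul_nonpos_of_nonpos_of_nonneg fab ade.le
  have z1 : ori a b d = 0 := by
    have : ori a b d * ori e f a = 0 := by linarith
    exact (mul_eq_zero.1 this).resolve_right efa.ne'
  have z2 : ori a d f = 0 := by
    have : ori a b e * ori a d f = 0 := by linarith
    exact (mul_eq_zero.1 this).resolve_left abe.ne
  set k := ori a b c / ori a c d with hk
  set l := ori e f a / ori a d e with hl
  have kpos : 0 < k := div_pos abc acd
  have lpos : 0 < l := div_pos efa ade
  have eb : b = a + k • (a - d) := by
    have q1 : ori a c d * (b.1 - a.1) = ori a b c * (a.1 - d.1) + ori a b d * (c.1 - a.1) := by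
      unfold ori; ring
    have q2 : ori a c d * (b.2 - a.2) = ori a b c * (a.2 - d.2) + ori a b d * (c.2 - a.2) := by
      unfold ori; ring
    rw [z1] at q1 q2
    ext <;> simp [hk] <;> field_simp <;> linarith
  have ef : f = a + l • (a - d) := by
    have q1 : ori a d e * (f.1 - a.1) = ori e f a * (a.1 - d.1) + ori a d f * (e.1 - a.1) := by
      unfold ori; ring
    have q2 : ori a d e * (f.2 - a.2) = ori e f a * (a.2 - d.2) + ori a d f * (e.2 - a.2) := by
      unfold ori; ring
    rw [z2] at q1 q2
    ext <;> simp [hl] <;> field_simp <;> linarith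
  rcases le_total k l with hkl | hkl
  · have hb : b ∈ segment ℝ f a := by
      refine ⟨k / l, 1 - k / l, by positivity, ?_, by ring, ?_⟩
      · rw [sub_nonneg, div_le_one lpos]; exact hkl
      · rw [eb, ef]; ext <;> simp <;> field_simp <;> ring
    have := (hadj ⟨hb, right_mem_segment ℝ a b⟩).1
    rcases this with h | h
    · exact hbf h
    · exact hab h.symm
  · have hf : f ∈ segment ℝ a b := by
      refine ⟨1 - l / k, l / k, ?_, by positivity, by ring, ?_⟩
      · rw [sub_nonneg, div_le_one kpos]; exact hkl
      · rw [eb, ef]; ext <;> simp <;> field_simp <;> ring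
    have := (hadj ⟨left_mem_segment ℝ f a, hf⟩).2
    rcases this with h | h
    · exact hfa h
    · exact hbf h.symm

/-- Key claim of case `rccrcc`-2 of Theorem 7.  Let `abcdef` be a simple
counterclockwise hexagon whose reflex vertices are exactly `a` and `d`.  Then either
both diagonals `ae` and `bd` lie inside the hexagon, or both diagonals `ac` and `df`
do. -/
theorem hexagon_rccrcc_diagonals (v : Fin 6 → Pt)
    (hsimple : IsSimplePolygon v) (hccw : IsCCW v)
    (ha : ReflexAt v 0) (hd : ReflexAt v 3)
    (hb : StrictlyConvexAt v 1) (hc : StrictlyConvexAt v 2)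
    (he : StrictlyConvexAt v 4) (hf : StrictlyConvexAt v 5) :
    (segment ℝ (v 0) (v 4) ⊆ polyRegion v ∧ segment ℝ (v 1) (v 3) ⊆ polyRegion v) ∨
    (segment ℝ (v 0) (v 2) ⊆ polyRegion v ∧ segment ℝ (v 3) (v 5) ⊆ polyRegion v) := by
  obtain ⟨-, hinj, hs⟩ := hsimple
  have hdet : ∀ p q r : Pt, det2 (q - p) (r - q) = ori p q r := by
    intro p q r; simp only [det2, ori, Prod.fst_sub, Prod.snd_sub]; ring
  have fab : ori (v 5) (v 0) (v 1) ≤ 0 := by rw [← hdet]; exact ha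
  have cde : ori (v 2) (v 3) (v 4) ≤ 0 := by rw [← hdet]; exact hd
  have abc : 0 < ori (v 0) (v 1) (v 2) := by rw [← hdet]; exact hb
  have bcd : 0 < ori (v 1) (v 2) (v 3) := by rw [← hdet]; exact hc
  have dfe : 0 < ori (v 3) (v 4) (v 5) := by rw [← hdet]; exact he
  have efa : 0 < ori (v 4) (v 5) (v 0) := by rw [← hdet]; exact hf
  have hne : ∀ i j : Fin 6, i ≠ j → v i ≠ v j := fun i j h => hinj.ne h
  have hseg : ∀ i : Fin 6, segment ℝ (v i) (v (i + 1)) ⊆ polyBoundary v :=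
    fun i => Set.subset_iUnion (fun i : Fin 6 => segment ℝ (v i) (v (i + 1))) i
  obtain ⟨Z1, Z2⟩ := zigzag (hseg 0) (hseg 1) (hseg 2) (hseg 3) (hseg 4) (hseg 5)
  have X1 : 0 < ori (v 0) (v 1) (v 3) ∨ 0 < ori (v 0) (v 2) (v 3) := by
    by_contra! hh
    obtain ⟨x, hx1, hx2⟩ := seg_cross abc hh.1 hh.2 bcd
    obtain ⟨h1, h2⟩ := hs 0 2 (by decide) ⟨hx1, hx2⟩
    rcases h1 with h1 | h1 <;> rcases h2 with h2 | h2 <;>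
      exact hne _ _ (by decide) (h1.symm.trans h2)
  have X2 : 0 < ori (v 3) (v 4) (v 0) ∨ 0 < ori (v 3) (v 5) (v 0) := by
    by_contra! hh
    obtain ⟨x, hx1, hx2⟩ := seg_cross dfe hh.1 hh.2 efa
    obtain ⟨h1, h2⟩ := hs 3 5 (by decide) ⟨hx1, hx2⟩
    rcases h1 with h1 | h1 <;> rcases h2 with h2 | h2 <;>
      exact hne _ _ (by decide) (h1.symm.trans h2)
  rw [ori_rot (v 0), ori_rot (v 0)] at X2
  by_cases p1 : 0 < ori (v 0) (v 1) (v 3)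
  · by_cases p2 : 0 < ori (v 0) (v 3) (v 4)
    · exact Or.inl (Z1 p1 p2 bcd efa)
    · have p4 := X2.resolve_left p2
      by_cases p3 : 0 < ori (v 0) (v 2) (v 3)
      · exact Or.inr (Z2 p3 p4 abc dfe)
      · exfalso
        refine bad_case (a := v 3) (b := v 4) (c := v 5) (d := v 0) (e := v 1) (f := v 2)
          (hne _ _ (by decide)) (hne _ _ (by decide)) (hne _ _ (by decide))
          (hs 2 3 (by decide)) dfe fab bcd cde ?_ ?_ ?_ ?_
        · rwa [ori_rot]
        · rwa [← ori_rot]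
        · rw [ori_rot]; exact not_lt.1 p2
        · rw [← ori_rot]; exact not_lt.1 p3
  · have p3 := X1.resolve_left p1
    by_cases p4 : 0 < ori (v 0) (v 3) (v 5)
    · exact Or.inr (Z2 p3 p4 abc dfe)
    · exact (bad_case (hne _ _ (by decide)) (hne _ _ (by decide)) (hne _ _ (by decide))
        (hs 5 0 (by decide)) abc cde efa fab p3 (X2.resolve_right p4)
        (not_lt.1 p1) (not_lt.1 p4)).elim
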